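/- For every ε > 0, the embedding of D_0^{1,2}(1, +∞) into L²((1,∞); dt/t^{2+ε}) is compact: for every sequence (φ_n) in D_0^{1,2}(1, +∞) with sup_n ∫_1^∞ ‖φ̇_n(t)‖_M² dt < ∞, there exist a subsequence (φ_{n_k}) and a function φ̄ ∈ D_0^{1,2}(1, +∞) such that ∫_1^∞ ‖φ_{n_k}(t) − φ̄(t)‖_M²/t^{2+ε} dt → 0 as k → ∞. -/

import Mathlib

open MeasureTheory Real Set Filter Topology
open scoped RealInnerProductSpace ENNReal

noncomputable section
namespace NBodyHJ

attribute [local instance] Classical.propDecidable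

abbrev Conf (d N : ℕ) := Fin N → EuclideanSpace ℝ (Fin d)

variable {d N : ℕ}

/-- The mass inner product on the configuration space. -/
def minner (m : Fin N → ℝ) (x y : Conf d N) : ℝ := ∑ i, m i * ⟪x i, y i⟫

/-- The mass norm on the configuration space. -/
def mnorm (m : Fin N → ℝ) (x : Conf d N) : ℝ := Real.sqrt (minner m x x)

/-- Membership in the zero-barycenter configuration space `X`. -/
def inX (m : Fin N → ℝ) (x : Conf d N) : Prop := ∑ i, m i • x i = 0

/-- Collision configurations. -/
def collision (x : Conf d N) : Prop := ∃ i j, i ≠ j ∧ x i = x j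

/-- Membership in the collision-free zero-barycenter space `Ω`. -/
def inOmega (m : Fin N → ℝ) (x : Conf d N) : Prop := inX m x ∧ ¬ collision x

/-- The Newtonian potential (with junk value `0` for a colliding pair). -/
def U (m : Fin N → ℝ) (x : Conf d N) : ℝ :=
  ∑ i : Fin N, ∑ j : Fin N, if i < j then m i * m j / ‖x i - x j‖ else 0

/-- The time interval `(t₀, T)`, where `T ∈ (t₀, +∞]` is extended-real. -/
def timeSet (t0 : ℝ) (T : EReal) : Set ℝ := {t : ℝ | t0 < t ∧ (t : EReal) < T}

/-- Membership of the pair (curve, derivative) `(φ, φ')` in `D₀^{1,2}(t₀, T)`: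
`φ` starts at `0`, takes values in `X`, is the integral of `φ'` (hence locally
absolutely continuous), and `φ'` has finite `L²` mass norm on `(t₀, T)`. -/
def InD (m : Fin N → ℝ) (t0 : ℝ) (T : EReal) (φ φ' : ℝ → Conf d N) : Prop :=
  φ t0 = 0 ∧
  (∀ t : ℝ, t0 ≤ t → (t : EReal) < T → inX m (φ t)) ∧
  (∀ t : ℝ, t0 ≤ t → (t : EReal) < T → φ t = ∫ s in Set.Ioc t0 t, φ' s) ∧
  (∀ t : ℝ, t0 ≤ t → (t : EReal) < T → IntegrableOn φ' (Set.Ioc t0 t)) ∧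
  IntegrableOn (fun t => (mnorm m (φ' t)) ^ 2) (timeSet t0 T)

/-- The norm `‖φ‖_{D_T}`. -/
def Dnorm (m : Fin N → ℝ) (t0 : ℝ) (T : EReal) (φ' : ℝ → Conf d N) : ℝ :=
  Real.sqrt (∫ t in timeSet t0 T, (mnorm m (φ' t)) ^ 2)

/-- The motion `γ(t) = φ(t) + t a + x - a` associated with `φ` in the hyperbolic case. -/
def hypCurve (a x : Conf d N) (φ : ℝ → Conf d N) (t : ℝ) : Conf d N :=
  φ t + t • a + x - a

/-- The integrand of the hyperbolic renormalized Lagrangian action. -/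
def hypIntegrand (m : Fin N → ℝ) (a x : Conf d N) (φ φ' : ℝ → Conf d N) (t : ℝ) : ℝ :=
  (mnorm m (φ' t)) ^ 2 / 2 + U m (hypCurve a x φ t) - U m (t • a)

/-- The hyperbolic renormalized Lagrangian action `A_{x,[1,T]}(φ)`, with values in
`ℝ ∪ {+∞}` : it equals the integral of the renormalized Lagrangian if this integrand is
integrable and the motion is a.e. collision-free, and `+∞` otherwise. -/
def hypAction (m : Fin N → ℝ) (a x : Conf d N) (T : EReal) (φ φ' : ℝ → Conf d N) : EReal :=
  if IntegrableOn (hypIntegrand m a x φ φ') (timeSet 1 T) ∧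
      (∀ᵐ t ∂volume.restrict (timeSet 1 T), ¬ collision (hypCurve a x φ t))
  then ((∫ t in timeSet 1 T, hypIntegrand m a x φ φ' t : ℝ) : EReal)
  else (⊤ : EReal)

/-- The infimum of the hyperbolic renormalized action over `D₀^{1,2}(1,T)`. -/
def hypInf (m : Fin N → ℝ) (a x : Conf d N) (T : EReal) : EReal :=
  ⨅ (φ : ℝ → Conf d N) (φ' : ℝ → Conf d N) (_ : InD m 1 T φ φ'), hypAction m a x T φ φ'

/-- The renormalized value function `v(x)` in the hyperbolic case. -/
def hypValue (m : Fin N → ℝ) (a x : Conf d N) : ℝ :=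
  (hypInf m a x ⊤).toReal - minner m a x


/-- A bounded sequence in a separable Hilbert space has a weakly convergent subsequence. -/
lemma exists_subseq_tendsto_inner {H : Type*} [NormedAddCommGroup H] [InnerProductSpace ℝ H]
    [CompleteSpace H] [TopologicalSpace.SeparableSpace H] (x : ℕ → H) (R : ℝ)
    (hx : ∀ n, ‖x n‖ ≤ R) :
    ∃ k : ℕ → ℕ, StrictMono k ∧ ∃ y : H, ∀ c : H,
      Tendsto (fun n => ⟪c, x (k n)⟫) atTop (𝓝 ⟪c, y⟫) := by
  obtain ⟨l, -, k, hk, hl⟩ := WeakDual.isSeqCompact_closedBall ℝ H 0 R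
    (x := fun n => StrongDual.toWeakDual (InnerProductSpace.toDual ℝ H (x n)))
    (fun n => by simpa using hx n)
  refine ⟨k, hk, (InnerProductSpace.toDual ℝ H).symm (WeakDual.toStrongDual l), fun c => ?_⟩
  have h := (WeakDual.eval_continuous c).continuousAt.tendsto.comp hl
  have e : ⟪c, (InnerProductSpace.toDual ℝ H).symm (WeakDual.toStrongDual l)⟫ = l c := by
    rw [real_inner_comm, InnerProductSpace.toDual_symm_apply]
    rfl
  rw [e]
  refine h.congr fun n => ?_
  rw [real_inner_comm]
  rfl

section Primitive

variable {E : Type*} [NormedAddCommGroup E] [InnerProductSpace ℝ E] [CompleteSpace E]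
  {α : Type*} [MeasurableSpace α] {μ : Measure α} {s : Set α}

/-- Cauchy-Schwarz bound for set integrals of square integrable functions. -/
lemma norm_setIntegral_sq_le (hs : MeasurableSet s) (hμs : μ s ≠ ∞) (f : Lp E 2 μ) :
    ‖∫ x in s, f x ∂μ‖ ^ 2 ≤ μ.real s * ‖f‖ ^ 2 := by
  set c := ∫ x in s, f x ∂μ with hc
  have h1 : ‖c‖ ^ 2 = ⟪indicatorConstLp 2 hs hμs c, f⟫ := by
    rw [L2.inner_indicatorConstLp_eq_inner_setIntegral ℝ hs hμs c f, ← hc,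
      real_inner_self_eq_norm_sq]
  have h2 : ‖indicatorConstLp 2 hs hμs c‖ = ‖c‖ * √(μ.real s) := by
    rw [norm_indicatorConstLp (by simp) (by simp), Real.sqrt_eq_rpow]
    simp
  have h3 := real_inner_le_norm (indicatorConstLp 2 hs hμs c) f
  rw [← h1, h2] at h3
  have h4 : ‖c‖ ≤ √(μ.real s) * ‖f‖ := by
    rcases (norm_nonneg c).eq_or_lt with h | h
    · rw [← h]
      positivity
    · exact le_of_mul_le_mul_left (by linarith) h
  calc ‖c‖ ^ 2 ≤ (√(μ.real s) * ‖f‖) ^ 2 := by gcongr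
    _ = μ.real s * ‖f‖ ^ 2 := by rw [mul_pow, Real.sq_sqrt measureReal_nonneg]

/-- Weak convergence in `L²` implies convergence of integrals over sets of finite measure. -/
lemma tendsto_setIntegral_of_tendsto_inner [FiniteDimensional ℝ E] (hs : MeasurableSet s)
    (hμs : μ s ≠ ∞) {f : ℕ → Lp E 2 μ} {g : Lp E 2 μ}
    (h : ∀ c : Lp E 2 μ, Tendsto (fun n => ⟪c, f n⟫) atTop (𝓝 ⟪c, g⟫)) :
    Tendsto (fun n => ∫ x in s, f n x ∂μ) atTop (𝓝 (∫ x in s, g x ∂μ)) := by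
  have hc : ∀ c : E, Tendsto (fun n => ⟪c, ∫ x in s, f n x ∂μ⟫) atTop
      (𝓝 ⟪c, ∫ x in s, g x ∂μ⟫) := fun c => by
    simpa only [L2.inner_indicatorConstLp_eq_inner_setIntegral] using
      h (indicatorConstLp 2 hs hμs c)
  let b := stdOrthonormalBasis ℝ E
  rw [← b.sum_repr' (∫ x in s, g x ∂μ)]
  exact (tendsto_finsetSum _ fun i _ => (hc (b i)).smul_const _).congr fun n => b.sum_repr' _

end Primitive

/-- The primitive of a locally integrable function is continuous. -/
lemma continuousOn_setIntegral_Ioc {E : Type*} [NormedAddCommGroup E] [NormedSpace ℝ E]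
    {f : ℝ → E} {a : ℝ} (hf : ∀ t, a ≤ t → IntegrableOn f (Ioc a t)) :
    ContinuousOn (fun t => ∫ s in Ioc a t, f s) (Ioi a) := by
  intro t ht
  have ht' : a < t := ht
  have h := intervalIntegral.continuousOn_primitive
    ((integrableOn_Icc_iff_integrableOn_Ioc).2 (hf (t + 1) (by linarith)))
  exact (h.continuousAt (Icc_mem_nhds ht' (by linarith))).continuousWithinAt

/-- The configuration space with its (unweighted) Euclidean norm. -/
abbrev EConf (d N : ℕ) := PiLp 2 (fun _ : Fin N => EuclideanSpace ℝ (Fin d))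

/-- The identification of `Conf d N` with the Euclidean space `EConf d N`. -/
def toEConf (d N : ℕ) : Conf d N ≃L[ℝ] EConf d N :=
  (PiLp.continuousLinearEquiv 2 ℝ (fun _ : Fin N => EuclideanSpace ℝ (Fin d))).symm

lemma norm_toEConf_sq (x : Conf d N) : ‖toEConf d N x‖ ^ 2 = ∑ i, ‖x i‖ ^ 2 :=
  PiLp.norm_sq_eq_of_L2 _ _

lemma mnorm_sq {m : Fin N → ℝ} (hm : ∀ i, 0 < m i) (x : Conf d N) :
    mnorm m x ^ 2 = ∑ i, m i * ‖x i‖ ^ 2 := by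
  have h : minner m x x = ∑ i, m i * ‖x i‖ ^ 2 := by
    simp [minner]
  rw [mnorm, h, Real.sq_sqrt]
  exact Finset.sum_nonneg fun i _ => mul_nonneg (hm i).le (sq_nonneg _)

lemma mnorm_sq_le {m : Fin N → ℝ} (hm : ∀ i, 0 < m i) (x : Conf d N) :
    mnorm m x ^ 2 ≤ (∑ i, m i) * ‖toEConf d N x‖ ^ 2 := by
  rw [mnorm_sq hm, norm_toEConf_sq, Finset.sum_mul]
  refine Finset.sum_le_sum fun i _ => mul_le_mul_of_nonneg_left ?_ (hm i).le
  exact Finset.single_le_sum (f := fun i => ‖x i‖ ^ 2) (fun j _ => sq_nonneg _)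
    (Finset.mem_univ i)

lemma norm_toEConf_sq_le {m : Fin N → ℝ} (hm : ∀ i, 0 < m i) (x : Conf d N) :
    ‖toEConf d N x‖ ^ 2 ≤ (∑ i, (m i)⁻¹) * mnorm m x ^ 2 := by
  rw [mnorm_sq hm, norm_toEConf_sq, Finset.sum_mul]
  refine Finset.sum_le_sum fun i _ => ?_
  rw [inv_mul_eq_div, le_div_iff₀' (hm i)]
  exact Finset.single_le_sum (f := fun i => m i * ‖x i‖ ^ 2)
    (fun j _ => mul_nonneg (hm j).le (sq_nonneg _)) (Finset.mem_univ i)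

lemma continuous_mnorm (m : Fin N → ℝ) : Continuous (mnorm (d := d) m) := by
  unfold mnorm minner
  fun_prop

lemma timeSet_top (t0 : ℝ) : timeSet t0 ⊤ = Ioi t0 := by
  ext t
  simp [timeSet, EReal.coe_lt_top]

/-- The derivative of a curve in `D₀^{1,2}(t₀, ∞)` is square integrable. -/
lemma InD.memLp_toEConf {m : Fin N → ℝ} (hm : ∀ i, 0 < m i) {t0 : ℝ} {φ φ' : ℝ → Conf d N}
    (h : InD m t0 ⊤ φ φ') :
    MemLp (fun t => toEConf d N (φ' t)) 2 (volume.restrict (Ioi t0)) := by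
  obtain ⟨-, -, -, hint, hsq⟩ := h
  rw [timeSet_top] at hsq
  have hU : Ioi t0 = ⋃ n : ℕ, Ioc t0 (t0 + n) := by
    ext t
    simp only [mem_Ioi, mem_iUnion, mem_Ioc, exists_and_left, iff_self_and]
    intro _
    obtain ⟨n, hn⟩ := exists_nat_ge (t - t0)
    exact ⟨n, by linarith⟩
  have hmeas : AEStronglyMeasurable φ' (volume.restrict (Ioi t0)) := by
    rw [hU, aestronglyMeasurable_iUnion_iff]
    exact fun n => (hint _ (by simp) (EReal.coe_lt_top _)).aestronglyMeasurable
  have hmeas' := (toEConf d N).continuous.comp_aestronglyMeasurable hmeas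
  refine (memLp_two_iff_integrable_sq_norm hmeas').2 ?_
  refine (hsq.const_mul (∑ i, (m i)⁻¹)).mono' (hmeas'.norm.pow 2) (ae_of_all _ fun t => ?_)
  rw [Real.norm_of_nonneg (by positivity)]
  exact norm_toEConf_sq_le hm _

/-- The curve with square integrable derivative `g`, provided it stays in `X`, belongs to
`D₀^{1,2}(t₀, ∞)`. -/
lemma inD_of_memLp {m : Fin N → ℝ} (hm : ∀ i, 0 < m i) {t0 : ℝ} {g : ℝ → EConf d N}
    (hg : MemLp g 2 (volume.restrict (Ioi t0)))
    (hX : ∀ t, t0 ≤ t → inX m (∫ s in Ioc t0 t, (toEConf d N).symm (g s))) :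
    InD m t0 ⊤ (fun t => ∫ s in Ioc t0 t, (toEConf d N).symm (g s))
      (fun s => (toEConf d N).symm (g s)) := by
  refine ⟨by simp, fun t ht _ => hX t ht, fun t _ _ => rfl, fun t _ _ => ?_, ?_⟩
  · have h : MemLp g 2 (volume.restrict (Ioc t0 t)) :=
      hg.mono_measure (Measure.restrict_mono Ioc_subset_Ioi_self le_rfl)
    exact (toEConf d N).symm.toContinuousLinearMap.integrable_comp (h.integrable (by norm_num))
  · rw [timeSet_top]
    have hsq := (memLp_two_iff_integrable_sq_norm hg.1).1 hg
    refine (hsq.const_mul (∑ i, m i)).mono' ?_ (ae_of_all _ fun t => ?_)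
    · exact ((continuous_mnorm m).comp (toEConf d N).symm.continuous).comp_aestronglyMeasurable
        hg.1 |>.pow 2
    · rw [Real.norm_of_nonneg (by positivity)]
      simpa using mnorm_sq_le hm ((toEConf d N).symm (g t))

lemma InD.continuousOn {m : Fin N → ℝ} {t0 : ℝ} {φ φ' : ℝ → Conf d N}
    (h : InD m t0 ⊤ φ φ') : ContinuousOn φ (Ioi t0) :=
  (continuousOn_setIntegral_Ioc fun t ht => h.2.2.2.1 t ht (EReal.coe_lt_top t)).congr
    fun t ht => h.2.2.1 t (le_of_lt ht) (EReal.coe_lt_top t)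

/-- **Compact embedding** of `D₀^{1,2}(1, +∞)` into `L²((1,∞); dt/t^{2+ε})`, `ε > 0` :
every sequence in `D₀^{1,2}(1, +∞)` which is bounded in the `D`-norm admits a subsequence
converging to some `φ̄ ∈ D₀^{1,2}(1, +∞)` in the weighted `L²` norm. -/
theorem compact_embedding {d N : ℕ} (hd : 2 ≤ d) (hN : 2 ≤ N)
    (m : Fin N → ℝ) (hm : ∀ i, 0 < m i)
    (ε : ℝ) (hε : 0 < ε)
    (φ φ' : ℕ → ℝ → Conf d N) (hmem : ∀ n, InD m 1 ⊤ (φ n) (φ' n))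
    (C : ℝ) (hbdd : ∀ n, ∫ t in Set.Ioi (1:ℝ), (mnorm m (φ' n t)) ^ 2 ≤ C) :
    ∃ k : ℕ → ℕ, StrictMono k ∧
      ∃ ψ ψ' : ℝ → Conf d N, InD m 1 ⊤ ψ ψ' ∧
        Filter.Tendsto
          (fun j => ∫ t in Set.Ioi (1:ℝ), (mnorm m (φ (k j) t - ψ t)) ^ 2 / t ^ (2 + ε))
          Filter.atTop (nhds 0) := by
  set μ : Measure ℝ := volume.restrict (Ioi 1) with hμ
  have hfin : ∀ t : ℝ, μ (Ioc 1 t) ≠ ∞ := fun t =>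
    ((Measure.restrict_apply_le _ _).trans_lt measure_Ioc_lt_top).ne
  have hrestr : ∀ t : ℝ, μ.restrict (Ioc 1 t) = volume.restrict (Ioc 1 t) := fun t =>
    Measure.restrict_restrict_of_subset Ioc_subset_Ioi_self
  have hreal : ∀ t : ℝ, 1 ≤ t → μ.real (Ioc 1 t) ≤ t := fun t ht => by
    rw [hμ, measureReal_restrict_apply measurableSet_Ioc,
      inter_eq_left.2 Ioc_subset_Ioi_self, Real.volume_real_Ioc_of_le ht]
    linarith
  have hL : ∀ n, MemLp (fun t => toEConf d N (φ' n t)) 2 μ := fun n => (hmem n).memLp_toEConf hm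
  let F : ℕ → Lp (EConf d N) 2 μ := fun n => (hL n).toLp _
  have hFφ : ∀ n t, 1 ≤ t → ∫ s in Ioc 1 t, F n s ∂μ = toEConf d N (φ n t) := fun n t ht => by
    rw [(hmem n).2.2.1 t ht (EReal.coe_lt_top t), ← (toEConf d N).integral_comp_comm, ← hrestr]
    exact integral_congr_ae (ae_restrict_of_ae (hL n).coeFn_toLp)
  have hc0 : 0 ≤ ∑ i, (m i)⁻¹ := Finset.sum_nonneg fun i _ => (inv_pos.2 (hm i)).le
  have hM0 : 0 ≤ ∑ i, m i := Finset.sum_nonneg fun i _ => (hm i).le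
  have hFbdd : ∀ n, ‖F n‖ ≤ √((∑ i, (m i)⁻¹) * C) := fun n => by
    refine Real.le_sqrt_of_sq_le ?_
    have h1 : ‖F n‖ ^ 2 = ∫ t, ‖toEConf d N (φ' n t)‖ ^ 2 ∂μ := by
      rw [← real_inner_self_eq_norm_sq, L2.inner_def]
      refine integral_congr_ae ?_
      filter_upwards [(hL n).coeFn_toLp] with t ht
      rw [ht, real_inner_self_eq_norm_sq]
    have hsq := (hmem n).2.2.2.2
    rw [timeSet_top] at hsq
    rw [h1]
    calc ∫ t, ‖toEConf d N (φ' n t)‖ ^ 2 ∂μ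
        ≤ ∫ t, (∑ i, (m i)⁻¹) * mnorm m (φ' n t) ^ 2 ∂μ :=
          integral_mono ((memLp_two_iff_integrable_sq_norm (hL n).1).1 (hL n))
            (hsq.const_mul _) fun t => norm_toEConf_sq_le hm _
      _ = (∑ i, (m i)⁻¹) * ∫ t, mnorm m (φ' n t) ^ 2 ∂μ := integral_const_mul _ _
      _ ≤ (∑ i, (m i)⁻¹) * C := mul_le_mul_of_nonneg_left (hbdd n) hc0
  have : Fact ((2 : ℝ≥0∞) ≠ ∞) := ⟨by simp⟩
  obtain ⟨k, hk, G, hG⟩ := exists_subseq_tendsto_inner F _ hFbdd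
  let ψ : ℝ → Conf d N := fun t => ∫ s in Ioc 1 t, (toEConf d N).symm (G s)
  have hGψ : ∀ t, ∫ s in Ioc 1 t, G s ∂μ = toEConf d N (ψ t) := fun t => by
    simp only [ψ]
    rw [(toEConf d N).symm.integral_comp_comm, ContinuousLinearEquiv.apply_symm_apply, hrestr]
  have hlim : ∀ t, 1 ≤ t → Tendsto (fun j => φ (k j) t) atTop (𝓝 (ψ t)) := fun t ht => by
    have h := tendsto_setIntegral_of_tendsto_inner measurableSet_Ioc (hfin t) hG
    simp only [hFφ _ t ht, hGψ] at h
    simpa [Function.comp_def] using ((toEConf d N).symm.continuous.tendsto _).comp h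
  have hψ : InD m 1 ⊤ ψ (fun s => (toEConf d N).symm (G s)) := by
    refine inD_of_memLp hm (Lp.memLp G) fun t ht => ?_
    have hcont : Continuous fun x : Conf d N => ∑ i, m i • x i := by fun_prop
    refine tendsto_nhds_unique ((hcont.tendsto _).comp (hlim t ht)) ?_
    refine tendsto_const_nhds.congr fun j => ?_
    exact ((hmem (k j)).2.1 t ht (EReal.coe_lt_top t)).symm
  refine ⟨k, hk, ψ, _, hψ, ?_⟩
  set K : ℝ := (∑ i, m i) * (√((∑ i, (m i)⁻¹) * C) + ‖G‖) ^ 2 with hK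
  have hbound : ∀ j t, 1 < t →
      mnorm m (φ (k j) t - ψ t) ^ 2 / t ^ (2 + ε) ≤ K * t ^ (-(1 + ε)) := fun j t ht => by
    have ht0 : 0 < t := by linarith
    have hdiff : ∫ s in Ioc 1 t, (F (k j) - G) s ∂μ = toEConf d N (φ (k j) t - ψ t) := by
      rw [map_sub, ← hFφ _ t ht.le, ← hGψ, ← integral_sub
        (integrableOn_Lp_of_measure_ne_top _ (by norm_num) (hfin t))
        (integrableOn_Lp_of_measure_ne_top _ (by norm_num) (hfin t))]
      exact integral_congr_ae (ae_restrict_of_ae (Lp.coeFn_sub _ _))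
    have h1 := norm_setIntegral_sq_le measurableSet_Ioc (hfin t) (F (k j) - G)
    rw [hdiff] at h1
    have h2 : ‖F (k j) - G‖ ≤ √((∑ i, (m i)⁻¹) * C) + ‖G‖ :=
      (norm_sub_le _ _).trans (by gcongr; exact hFbdd _)
    have h3 : mnorm m (φ (k j) t - ψ t) ^ 2 ≤ K * t :=
      calc mnorm m (φ (k j) t - ψ t) ^ 2
          ≤ (∑ i, m i) * ‖toEConf d N (φ (k j) t - ψ t)‖ ^ 2 := mnorm_sq_le hm _
        _ ≤ (∑ i, m i) * (t * (√((∑ i, (m i)⁻¹) * C) + ‖G‖) ^ 2) := by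
          gcongr
          refine h1.trans ?_
          gcongr
          exact hreal t ht.le
        _ = K * t := by rw [hK]; ring
    have h4 : t * t ^ (1 + ε) = t ^ (2 + ε) := by
      rw [← Real.rpow_one_add' ht0.le (by linarith)]
      ring_nf
    rw [div_le_iff₀ (by positivity), Real.rpow_neg ht0.le, ← h4]
    have : t ^ (1 + ε) ≠ 0 := by positivity
    field_simp
    linarith
  have hzero : ∫ _ in Ioi (1:ℝ), (0:ℝ) = 0 := by simp
  rw [← hzero]
  refine tendsto_integral_of_dominated_convergence (fun t => K * t ^ (-(1 + ε))) (fun j => ?_)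
    ((integrableOn_Ioi_rpow_of_lt (by linarith) one_pos).const_mul K) (fun j => ?_) ?_
  · refine ContinuousOn.aestronglyMeasurable ?_ measurableSet_Ioi
    refine ContinuousOn.div (((continuous_mnorm m).comp_continuousOn
      ((hmem (k j)).continuousOn.sub hψ.continuousOn)).pow 2)
      (continuousOn_id.rpow_const fun t ht => Or.inl ?_) fun t ht => ?_
    · exact (one_pos.trans ht).ne'
    · exact (Real.rpow_pos_of_pos (one_pos.trans ht) _).ne'
  · filter_upwards [ae_restrict_mem measurableSet_Ioi] with t ht
    have ht0 : (0:ℝ) < t := one_pos.trans ht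
    rw [Real.norm_of_nonneg (by positivity)]
    exact hbound j t ht
  · filter_upwards [ae_restrict_mem measurableSet_Ioi] with t ht
    have h1 : Tendsto (fun j => φ (k j) t - ψ t) atTop (𝓝 0) := by
      simpa using (hlim t (le_of_lt ht)).sub_const (ψ t)
    have h2 := (((continuous_mnorm m).tendsto 0).comp h1).pow 2 |>.div_const (t ^ (2 + ε))
    simpa [mnorm, minner, Function.comp_def] using h2

end NBodyHJ
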